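/- arXiv:2311.09789 — 4 statements merged into one kernel-verified Lean document; each statement's English description precedes it below -/
import Mathlib

section
/- Let σ be a social welfare function satisfying unanimity and independence, where X has at least 3 elements. Then there exists a unique ultrafilter U on V such that for every U ∈ U, all x, y ∈ X and every profile f, if x f(v) y for all v ∈ U then x σ(f) y (Kirman–Sondermann: the map σ ↦ U_σ is well defined and injective). -/
/-- A weak order: asymmetric and negatively transitive. -/
def IsWeakPref {X : Type*} (P : X → X → Prop) : Prop :=
  (∀ x y : X, P x y → ¬ P y x) ∧ ∀ x y z : X, ¬ P x y → ¬ P y z → ¬ P x z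

/-- A profile assigns a weak order to every voter. -/
def IsProf {V X : Type*} (f : V → X → X → Prop) : Prop := ∀ v : V, IsWeakPref (f v)

/-- A collection of subsets of `V` is a filter: upward closed, closed under
binary intersections, and proper. -/
def IsSetFilter {V : Type*} (F : Set (Set V)) : Prop :=
  (∀ A B : Set V, A ⊆ B → A ∈ F → B ∈ F) ∧
  (∀ A B : Set V, A ∈ F → B ∈ F → A ∩ B ∈ F) ∧
  (∅ : Set V) ∉ F

/-- An ultrafilter is a filter with no strictly finer filter. -/
def IsSetUltrafilter {V : Type*} (U : Set (Set V)) : Prop :=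
  IsSetFilter U ∧ ∀ F : Set (Set V), IsSetFilter F → ¬ U ⊂ F

/-- Unanimity: a unanimous preference is respected by the verdict. -/
def Unanimity {V X : Type*} (σ : (V → X → X → Prop) → X → X → Prop) : Prop :=
  ∀ (x y : X) (f : V → X → X → Prop), IsProf f → (∀ v : V, f v x y) → σ f x y

/-- Independence: profiles agreeing on `{x, y}` get verdicts agreeing on `{x, y}`. -/
def Independence {V X : Type*} (σ : (V → X → X → Prop) → X → X → Prop) : Prop :=
  ∀ (x y : X) (f g : V → X → X → Prop), IsProf f → IsProf g →
    (∀ v : V, (f v x y ↔ g v x y) ∧ (f v y x ↔ g v y x)) →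
    ((σ f x y ↔ σ g x y) ∧ (σ f y x ↔ σ g y x))

/-- Dictatorship: a single voter's strict preferences are always followed. -/
def Dictatorial {V X : Type*} (σ : (V → X → X → Prop) → X → X → Prop) : Prop :=
  ∃ v0 : V, ∀ (x y : X) (f : V → X → X → Prop), IsProf f → f v0 x y → σ f x y

/-- The ultrafilter `𝒰` is decisive for `σ`: every coalition in `𝒰` decides the verdict. -/
def Decisive {V X : Type*} (σ : (V → X → X → Prop) → X → X → Prop)
    (𝒰 : Set (Set V)) : Prop :=
  ∀ U ∈ 𝒰, ∀ (x y : X) (f : V → X → X → Prop), IsProf f →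
    (∀ v ∈ U, f v x y) → σ f x y

open Classical in
/-- Rank profile. -/
noncomputable def rkP {V X : Type*} (x y : X) (p q s : V → ℕ) : V → X → X → Prop :=
  fun v a b => (if a = x then p v else if a = y then q v else s v) <
    (if b = x then p v else if b = y then q v else s v)

theorem rkP_prof {V X : Type*} (x y : X) (p q s : V → ℕ) : IsProf (rkP x y p q s) := by
  intro v
  refine ⟨fun a b h h' => ?_, fun a b c h h' h'' => ?_⟩ <;> unfold rkP at * <;> omega

/-- Decisive on a pair. -/
def DD {V X : Type*} (σ : (V → X → X → Prop) → X → X → Prop) (A : Set V) (x y : X) : Prop :=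
  ∀ f : V → X → X → Prop, IsProf f → (∀ v ∈ A, f v x y) → σ f x y

/-- Almost decisive on a pair. -/
def EE {V X : Type*} (σ : (V → X → X → Prop) → X → X → Prop) (A : Set V) (x y : X) : Prop :=
  ∃ f : V → X → X → Prop, IsProf f ∧ (∀ v ∈ A, f v x y) ∧ (∀ v, v ∉ A → f v y x) ∧ σ f x y

theorem wp_trans {X : Type*} {P : X → X → Prop} (h : IsWeakPref P) {x y z : X}
    (h1 : P x y) (h2 : P y z) : P x z := by
  by_contra h3
  exact h.2 x z y h3 (h.1 _ _ h2) h1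

section
variable {V X : Type*} {σ : (V → X → X → Prop) → X → X → Prop}

theorem EE_use (hI : Independence σ) {A : Set V} {x y : X} (h : EE σ A x y)
    {g : V → X → X → Prop} (hg : IsProf g) (h1 : ∀ v ∈ A, g v x y)
    (h2 : ∀ v, v ∉ A → g v y x) : σ g x y := by
  obtain ⟨f, hf, f1, f2, f3⟩ := h
  refine (hI x y f g hf hg fun v => ?_).1.1 f3
  have a1 := (hf v).1 x y
  have a2 := (hg v).1 x y
  by_cases hv : v ∈ A
  · have := f1 v hv; have := h1 v hv; tauto
  · have := f2 v hv; have := h2 v hv; tauto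

open Classical in
theorem DD_EE {A : Set V} {x y : X} (hxy : x ≠ y) (h : DD σ A x y) : EE σ A x y := by
  have hg := rkP_prof x y (fun v => if v ∈ A then 0 else 1) (fun v => if v ∈ A then 1 else 0)
    (fun _ => 0)
  refine ⟨_, hg, ?_, ?_, h _ hg ?_⟩ <;> intro v hv <;> simp [rkP, hv, hxy, hxy.symm]

open Classical in
theorem EE_DD1 (hW : ∀ f : V → X → X → Prop, IsProf f → IsWeakPref (σ f))
    (hU : Unanimity σ) (hI : Independence σ) {A : Set V} {x y z : X} (hxy : x ≠ y)
    (hzx : z ≠ x) (hzy : z ≠ y) (h : EE σ A x y) : DD σ A x z := by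
  intro f hf hA
  have hg := rkP_prof x y (fun v => if v ∈ A then 0 else if f v z x then 2 else 1)
    (fun v => if v ∈ A then 1 else 0)
    (fun v => if v ∈ A then 2 else if f v x z then 2 else 1)
  refine (hI x z f _ hf hg fun v => ?_).1.2 (wp_trans (hW _ hg) (y := y)
    (EE_use hI h hg ?_ ?_) (hU _ _ _ hg ?_))
  · have a1 := (hf v).1 x z
    have a2 := hA v
    by_cases hv : v ∈ A <;> by_cases h1 : f v x z <;> by_cases h2 : f v z x <;>
      simp_all [rkP]
  · intro v hv; simp [rkP, hv, hxy.symm]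
  · intro v hv; simp [rkP, hv, hxy.symm]; split_ifs <;> omega
  · intro v; simp [rkP, hxy.symm, hzx, hzy]; split_ifs <;> omega

open Classical in
theorem EE_DD2 (hW : ∀ f : V → X → X → Prop, IsProf f → IsWeakPref (σ f))
    (hU : Unanimity σ) (hI : Independence σ) {A : Set V} {x y z : X} (hxy : x ≠ y)
    (hzx : z ≠ x) (hzy : z ≠ y) (h : EE σ A x y) : DD σ A z y := by
  intro f hf hA
  have hg := rkP_prof x y (fun v => if v ∈ A then 1 else 2)
    (fun v => if v ∈ A then 2 else if f v z y then 1 else 0)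
    (fun v => if v ∈ A then 0 else if f v y z then 1 else 0)
  refine (hI z y f _ hf hg fun v => ?_).1.2 (wp_trans (hW _ hg) (y := x)
    (hU _ _ _ hg ?_) (EE_use hI h hg ?_ ?_))
  · have a1 := (hf v).1 z y
    have a2 := hA v
    have := hxy.symm
    by_cases hv : v ∈ A <;> by_cases h1 : f v z y <;> by_cases h2 : f v y z <;>
      simp_all [rkP]
  · intro v; simp [rkP, hzx, hzy]; split_ifs <;> omega
  · intro v hv; simp [rkP, hv, hxy.symm]
  · intro v hv; simp [rkP, hv, hxy.symm]; split_ifs <;> omega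

theorem EE_all (hX : ∃ a b c : X, a ≠ b ∧ a ≠ c ∧ b ≠ c)
    (hW : ∀ f : V → X → X → Prop, IsProf f → IsWeakPref (σ f))
    (hU : Unanimity σ) (hI : Independence σ) {A : Set V} {x y : X} (hxy : x ≠ y)
    (h : EE σ A x y) : ∀ u w, u ≠ w → DD σ A u w := by
  have third : ∀ u w : X, ∃ t, t ≠ u ∧ t ≠ w := by
    intro u w
    obtain ⟨a, b, c, h1, h2, h3⟩ := hX
    by_contra hc
    push Not at hc
    have q1 := hc a
    have q2 := hc b
    have q3 := hc c
    by_cases e1 : a = u <;> by_cases e2 : b = u <;> by_cases e3 : c = u <;> grind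
  have s1 : ∀ {x y z : X}, x ≠ y → z ≠ x → z ≠ y → EE σ A x y → EE σ A x z :=
    fun a b c d => DD_EE b.symm (EE_DD1 hW hU hI a b c d)
  have s2 : ∀ {x y z : X}, x ≠ y → z ≠ x → z ≠ y → EE σ A x y → EE σ A z y :=
    fun a b c d => DD_EE c (EE_DD2 hW hU hI a b c d)
  have k1 : ∀ w, x ≠ w → EE σ A x w := by
    intro w hw
    by_cases e : w = y
    · subst e; exact h
    · exact s1 hxy hw.symm e h
  have k2 : ∀ u w, u ≠ w → w ≠ x → EE σ A u w := by
    intro u w huw hw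
    by_cases e : u = x
    · subst e; exact k1 w huw
    · exact s2 hw.symm e huw (k1 w hw.symm)
  have k3 : ∀ u w, u ≠ w → EE σ A u w := by
    intro u w huw
    by_cases e : w = x
    · obtain ⟨t, ht, ht'⟩ := third u w
      exact s1 ht.symm huw.symm ht'.symm (k2 u t ht.symm (e ▸ ht'))
    · exact k2 u w huw e
  intro u w huw
  obtain ⟨t, ht, ht'⟩ := third u w
  exact EE_DD1 hW hU hI ht.symm huw.symm ht'.symm (k3 u t ht.symm)

/-- Decisive coalitions. -/
def decC (σ : (V → X → X → Prop) → X → X → Prop) : Set (Set V) := {A | ∀ x y, DD σ A x y}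

theorem empty_not_dec (hX : ∃ a b c : X, a ≠ b ∧ a ≠ c ∧ b ≠ c)
    (hW : ∀ f : V → X → X → Prop, IsProf f → IsWeakPref (σ f)) : (∅ : Set V) ∉ decC σ := by
  intro h
  obtain ⟨a, b, c, -⟩ := hX
  have hg := rkP_prof (V := V) a b (fun _ => 0) (fun _ => 0) (fun _ => 0)
  have := h a a _ hg (by simp)
  exact (hW _ hg).1 _ _ this this

theorem EE_empty (hX : ∃ a b c : X, a ≠ b ∧ a ≠ c ∧ b ≠ c)
    (hW : ∀ f : V → X → X → Prop, IsProf f → IsWeakPref (σ f))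
    (hU : Unanimity σ) (hI : Independence σ) {x y : X} (hxy : x ≠ y) :
    ¬ EE σ (∅ : Set V) x y := by
  intro h
  have hg := rkP_prof (V := V) x y (fun _ => 0) (fun _ => 0) (fun _ => 0)
  have h1 := EE_all hX hW hU hI hxy h x y hxy _ hg (by simp)
  have h2 := EE_all hX hW hU hI hxy h y x hxy.symm _ hg (by simp)
  exact (hW _ hg).1 _ _ h1 h2

theorem EE_dec (hX : ∃ a b c : X, a ≠ b ∧ a ≠ c ∧ b ≠ c)
    (hW : ∀ f : V → X → X → Prop, IsProf f → IsWeakPref (σ f))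
    (hU : Unanimity σ) (hI : Independence σ) {A : Set V} {x y : X} (hxy : x ≠ y)
    (h : EE σ A x y) : A ∈ decC σ := by
  intro u w
  by_cases e : u = w
  · subst e
    intro f hf hA
    exfalso
    rcases A.eq_empty_or_nonempty with rfl | ⟨v, hv⟩
    · exact EE_empty hX hW hU hI hxy h
    · exact (hf v).1 _ _ (hA v hv) (hA v hv)
  · exact EE_all hX hW hU hI hxy h u w e

open Classical in
theorem dec_inter (hX : ∃ a b c : X, a ≠ b ∧ a ≠ c ∧ b ≠ c)
    (hW : ∀ f : V → X → X → Prop, IsProf f → IsWeakPref (σ f))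
    (hU : Unanimity σ) (hI : Independence σ) {A B : Set V} (hA : A ∈ decC σ)
    (hB : B ∈ decC σ) : A ∩ B ∈ decC σ := by
  obtain ⟨a, b, c, hab, hac, hbc⟩ := id hX
  have hg := rkP_prof a b
    (fun v => if v ∈ A then (if v ∈ B then 0 else 1) else 2)
    (fun v => if v ∈ A then (if v ∈ B then 1 else 2) else 0)
    (fun v => if v ∈ A then (if v ∈ B then 2 else 0) else 1)
  refine EE_dec hX hW hU hI hac ⟨_, hg, ?_, ?_,
    wp_trans (hW _ hg) (y := b) (hA a b _ hg ?_) (hB b c _ hg ?_)⟩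
  · rintro v ⟨h1, h2⟩; simp [rkP, h1, h2, hac.symm, hbc.symm]
  · intro v hv
    by_cases h1 : v ∈ A <;> by_cases h2 : v ∈ B <;>
      simp_all [rkP, hac.symm, hbc.symm]
  · intro v h1; by_cases h2 : v ∈ B <;> simp [rkP, h1, h2, hab.symm]
  · intro v h1; by_cases h2 : v ∈ A <;> simp [rkP, h1, h2, hab.symm, hac.symm, hbc.symm]

open Classical in
theorem dec_or (hX : ∃ a b c : X, a ≠ b ∧ a ≠ c ∧ b ≠ c)
    (hW : ∀ f : V → X → X → Prop, IsProf f → IsWeakPref (σ f))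
    (hU : Unanimity σ) (hI : Independence σ) (A : Set V) : A ∈ decC σ ∨ Aᶜ ∈ decC σ := by
  obtain ⟨a, b, c, hab, hac, hbc⟩ := id hX
  have hg := rkP_prof a b
    (fun v => if v ∈ A then 0 else 2)
    (fun v => if v ∈ A then 1 else 0)
    (fun v => if v ∈ A then 2 else 1)
  have hbc' := hU b c _ hg (by
    intro v; by_cases h : v ∈ A <;> simp [rkP, h, hab.symm, hac.symm, hbc.symm])
  by_cases hba : σ (rkP a b (fun v => if v ∈ A then 0 else 2)
    (fun v => if v ∈ A then 1 else 0) (fun v => if v ∈ A then 2 else 1)) b a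
  · right
    refine EE_dec hX hW hU hI hab.symm ⟨_, hg, ?_, ?_, hba⟩ <;> intro v hv <;> simp at hv <;>
      simp [rkP, hv, hab.symm]
  · left
    refine EE_dec hX hW hU hI hac ⟨_, hg, ?_, ?_, ?_⟩
    · intro v hv; simp [rkP, hv, hac.symm, hbc.symm]
    · intro v hv; simp [rkP, hv, hac.symm, hbc.symm]
    · by_contra h
      exact (hW _ hg).2 _ _ _ hba h hbc'

end

/-- Kirman–Sondermann: for every social welfare function satisfying
unanimity and independence there is a unique decisive ultrafilter. -/
theorem exists_unique_decisive_ultrafilter {V X : Type*}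
    (hX : ∃ a b c : X, a ≠ b ∧ a ≠ c ∧ b ≠ c)
    (σ : (V → X → X → Prop) → X → X → Prop)
    (hW : ∀ f : V → X → X → Prop, IsProf f → IsWeakPref (σ f))
    (hU : Unanimity σ) (hI : Independence σ) :
    ∃! 𝒰 : Set (Set V), IsSetUltrafilter 𝒰 ∧ Decisive σ 𝒰 := by
  have hF : IsSetFilter (decC σ) :=
    ⟨fun A B hAB hA x y f hf h => hA x y f hf fun v hv => h v (hAB hv),
      fun A B hA hB => dec_inter hX hW hU hI hA hB, empty_not_dec hX hW⟩
  refine ⟨decC σ, ⟨⟨hF, ?_⟩, fun A hA x y f hf h => hA x y f hf h⟩, ?_⟩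
  · intro F hF' hlt
    obtain ⟨A, hA, hA'⟩ := Set.exists_of_ssubset hlt
    have h1 := hlt.1 ((dec_or hX hW hU hI A).resolve_left hA')
    have h2 := hF'.2.1 _ _ hA h1
    rw [Set.inter_compl_self] at h2
    exact hF'.2.2 h2
  · rintro U' ⟨hU', hD⟩
    have hsub : U' ⊆ decC σ := fun A hA x y f hf h => hD A hA x y f hf h
    by_contra hne
    exact hU'.2 _ hF (hsub.ssubset_of_ne hne)
end

section
/- Let σ be a social welfare function satisfying unanimity and independence with X having at least 3 elements, and let U be an ultrafilter on V that is decisive for σ (for every U ∈ U, all x, y ∈ X and every profile f, if x f(v) y for all v ∈ U then x σ(f) y). Then σ is non-dictatorial if and only if U is free, i.e. ⋂U = ∅. -/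
/-- Kirman–Sondermann: a social welfare function with a decisive
ultrafilter is non-dictatorial iff that ultrafilter is free. -/
theorem nondictatorial_iff_free {V X : Type*}
    (hX : ∃ a b c : X, a ≠ b ∧ a ≠ c ∧ b ≠ c)
    (σ : (V → X → X → Prop) → X → X → Prop)
    (hW : ∀ f : V → X → X → Prop, IsProf f → IsWeakPref (σ f))
    (hU : Unanimity σ) (hI : Independence σ)
    (𝒰 : Set (Set V)) (h𝒰 : IsSetUltrafilter 𝒰) (hD : Decisive σ 𝒰) :
    ¬ Dictatorial σ ↔ ⋂₀ 𝒰 = ∅ := by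
  constructor
  · intro hnd
    by_contra hne
    obtain ⟨v, hv⟩ := Set.nonempty_iff_ne_empty.mpr hne
    have hF : IsSetFilter {A : Set V | v ∈ A} :=
      ⟨fun A B h hA => h hA, fun A B hA hB => ⟨hA, hB⟩, fun h => h⟩
    have hmem : ({v} : Set V) ∈ 𝒰 := by
      by_contra hn
      refine h𝒰.2 _ hF ⟨fun A hA => hv A hA, fun h => hn (h ?_)⟩
      exact Set.mem_singleton v
    apply hnd
    refine ⟨v, fun x y f hf hxy => hD _ hmem x y f hf ?_⟩
    intro w hw
    rw [Set.mem_singleton_iff.mp hw]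
    exact hxy
  · rintro hemp ⟨v0, hv0⟩
    have h1 : v0 ∉ ⋂₀ 𝒰 := by rw [hemp]; exact fun h => h
    obtain ⟨U, hUm, hvU⟩ : ∃ U ∈ 𝒰, v0 ∉ U := by
      by_contra hn
      push Not at hn
      exact h1 hn
    obtain ⟨a, b, c, hab, -, -⟩ := hX
    let f : V → X → X → Prop := fun v x y =>
      (v = v0 ∧ x = a ∧ y ≠ a) ∨ (v ≠ v0 ∧ x ≠ a ∧ y = a)
    have hf : IsProf f := by
      intro v
      constructor
      · intro x y
        simp only [f]
        tauto
      · intro x y z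
        simp only [f]
        tauto
    have h2 : σ f a b := hv0 a b f hf (Or.inl ⟨rfl, rfl, hab.symm⟩)
    have h3 : σ f b a := hD U hUm b a f hf (fun v hv =>
      Or.inr ⟨fun h => hvU (h ▸ hv), hab.symm, rfl⟩)
    exact (hW f hf).1 a b h2 h3
end

section
/- (Arrow's Impossibility Theorem) Let V be a finite nonempty set of voters and X a set of alternatives with at least 3 elements. Then every social welfare function σ satisfying unanimity and independence is dictatorial. -/
namespace ArrowAux

def rk {V X : Type*} (r : V → X → ℕ) : V → X → X → Prop := fun v a b => r v a < r v b

theorem rk_prof {V X : Type*} (r : V → X → ℕ) : IsProf (rk r) := by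
  intro v
  refine ⟨?_, ?_⟩ <;> intros <;> simp only [rk] at * <;> omega

/-- strong decisiveness on a pair -/
def S {V X : Type*} (σ : (V → X → X → Prop) → X → X → Prop) (A : Set V) (x y : X) : Prop :=
  ∀ f, IsProf f → (∀ v ∈ A, f v x y) → σ f x y

/-- weak decisiveness on a pair -/
def W {V X : Type*} (σ : (V → X → X → Prop) → X → X → Prop) (A : Set V) (x y : X) : Prop :=
  ∃ f, IsProf f ∧ (∀ v ∈ A, f v x y) ∧ (∀ v, v ∉ A → f v y x) ∧ σ f x y

theorem trans' {X : Type*} {P : X → X → Prop} (h : IsWeakPref P) {x y z : X}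
    (h1 : P x y) (h2 : P y z) : P x z := by
  by_contra h3
  exact h.2 x z y h3 (h.1 _ _ h2) h1

section
variable {V X : Type*} {σ : (V → X → X → Prop) → X → X → Prop}

theorem W_use (hI : Independence σ) {A : Set V} {x y : X} (h : W σ A x y)
    {g : V → X → X → Prop} (hg : IsProf g) (h1 : ∀ v ∈ A, g v x y)
    (h2 : ∀ v, v ∉ A → g v y x) : σ g x y := by
  obtain ⟨f, hf, f1, f2, f3⟩ := h
  refine (hI x y f g hf hg ?_).1.1 f3
  intro v
  by_cases hv : v ∈ A
  · have a := f1 v hv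
    have b := h1 v hv
    have c := (hf v).1 _ _ a
    have d := (hg v).1 _ _ b
    tauto
  · have a := f2 v hv
    have b := h2 v hv
    have c := (hf v).1 _ _ a
    have d := (hg v).1 _ _ b
    tauto

theorem S_W {A : Set V} {x y : X} (hxy : x ≠ y) (h : S σ A x y) : W σ A x y := by
  classical
  let r : V → X → ℕ := fun v a => if v ∈ A then (if a = x then 0 else 1)
    else (if a = y then 0 else 1)
  have h1 : ∀ v ∈ A, rk r v x y := by
    intro v hv; simp [rk, r, hv, hxy.symm]
  refine ⟨rk r, rk_prof r, h1, ?_, h _ (rk_prof r) h1⟩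
  intro v hv; simp [rk, r, hv, hxy]

theorem fwd (hW : ∀ f, IsProf f → IsWeakPref (σ f)) (hU : Unanimity σ) (hI : Independence σ)
    {A : Set V} {x y z : X} (hxy : x ≠ y) (hzx : z ≠ x) (hzy : z ≠ y) (h : W σ A x y) :
    S σ A x z := by
  classical
  intro f hf hA
  let r : V → X → ℕ := fun v a =>
    if v ∈ A then (if a = x then 0 else if a = y then 1 else 2)
    else if a = y then 0 else if a = x then (if f v z x then 2 else 1)
      else (if f v x z then 2 else 1)
  have hp := rk_prof r
  have e1 : σ (rk r) x y := by
    refine W_use hI h hp ?_ ?_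
    · intro v hv; simp [rk, r, hv, hxy.symm]
    · intro v hv; simp only [rk, r, hv, hxy, if_false, if_true]; split_ifs <;> omega
  have e2 : σ (rk r) y z := by
    refine hU _ _ _ hp ?_
    intro v
    by_cases hv : v ∈ A
    · simp [rk, r, hv, hxy.symm, hzx, hzy]
    · simp only [rk, r, hv, hzx, hzy, if_false, if_true]; split_ifs <;> omega
  refine (hI x z _ f hp hf ?_).1.1 (trans' (hW _ hp) e1 e2)
  intro v
  have as := (hf v).1 x z
  by_cases hv : v ∈ A
  · have := hA v hv
    simp [rk, r, hv, hzx, hzy, this, as]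
  · by_cases c1 : f v x z <;> by_cases c2 : f v z x <;>
      simp_all [rk, r]

theorem bwd (hW : ∀ f, IsProf f → IsWeakPref (σ f)) (hU : Unanimity σ) (hI : Independence σ)
    {A : Set V} {x y z : X} (hxy : x ≠ y) (hzx : z ≠ x) (hzy : z ≠ y) (h : W σ A x y) :
    S σ A z y := by
  classical
  intro f hf hA
  let r : V → X → ℕ := fun v a =>
    if v ∈ A then (if a = z then 0 else if a = x then 1 else 2)
    else if a = x then 3 else if a = y then (if f v z y then 2 else 1)
      else (if f v y z then 2 else 1)
  have hp := rk_prof r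
  have e1 : σ (rk r) x y := by
    refine W_use hI h hp ?_ ?_
    · intro v hv; simp [rk, r, hv, hxy.symm, hzx.symm, hzy.symm]
    · intro v hv; simp only [rk, r, hv, hxy.symm, if_false, if_true]; split_ifs <;> omega
  have e2 : σ (rk r) z x := by
    refine hU _ _ _ hp ?_
    intro v
    by_cases hv : v ∈ A
    · simp [rk, r, hv, hzx.symm]
    · simp only [rk, r, hv, hzx, hzy, if_false, if_true]; split_ifs <;> omega
  refine (hI z y _ f hp hf ?_).1.1 (trans' (hW _ hp) e2 e1)
  intro v
  have as := (hf v).1 z y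
  by_cases hv : v ∈ A
  · have := hA v hv
    simp [rk, r, hv, hxy.symm, hzy.symm, this, as]
  · have hyx := hxy.symm
    by_cases c1 : f v z y <;> by_cases c2 : f v y z <;>
      simp_all [rk, r]

theorem third (hX : ∃ a b c : X, a ≠ b ∧ a ≠ c ∧ b ≠ c) (x y : X) : ∃ z, z ≠ x ∧ z ≠ y := by
  obtain ⟨a, b, c, h1, h2, h3⟩ := hX
  by_contra! h
  have ha := h a
  have hb := h b
  have hc := h c
  by_cases p : a = x <;> by_cases q : b = x <;> by_cases t : c = x <;> simp_all

theorem spread (hX : ∃ a b c : X, a ≠ b ∧ a ≠ c ∧ b ≠ c)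
    (hW : ∀ f, IsProf f → IsWeakPref (σ f)) (hU : Unanimity σ) (hI : Independence σ)
    {A : Set V} {x y : X} (hxy : x ≠ y) (h : W σ A x y) : ∀ a b, a ≠ b → S σ A a b := by
  have F : ∀ {x y z : X}, x ≠ y → z ≠ x → S σ A x y → S σ A x z := by
    intro x y z h1 h2 h3
    by_cases e : z = y
    · rwa [e]
    · exact fwd hW hU hI h1 h2 e (S_W h1 h3)
  have B : ∀ {x y z : X}, x ≠ y → z ≠ y → S σ A x y → S σ A z y := by
    intro x y z h1 h2 h3
    by_cases e : z = x
    · rwa [e]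
    · exact bwd hW hU hI h1 e h2 (S_W h1 h3)
  obtain ⟨c, c1, c2⟩ := third hX x y
  have h0 : S σ A x y := F c1.symm hxy.symm (fwd hW hU hI hxy c1 c2 h)
  intro a b hab
  by_cases e : b = x
  · obtain ⟨w, w1, w2⟩ := third hX x a
    have h1 := F hxy w1 h0
    have h2 := B w1.symm w2.symm h1
    exact F w2.symm hab.symm h2
  · exact B (Ne.symm e) hab (F hxy e h0)

theorem split (hX : ∃ a b c : X, a ≠ b ∧ a ≠ c ∧ b ≠ c)
    (hW : ∀ f, IsProf f → IsWeakPref (σ f)) (hU : Unanimity σ) (hI : Independence σ)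
    {A : Set V} {u : V} (hu : u ∉ A) (h : ∀ a b, a ≠ b → S σ (insert u A) a b) :
    (∀ a b, a ≠ b → S σ {u} a b) ∨ (∀ a b, a ≠ b → S σ A a b) := by
  classical
  obtain ⟨x, y, z, hxy, hxz, hyz⟩ := id hX
  let r : V → X → ℕ := fun v a =>
    if v = u then (if a = x then 0 else if a = y then 1 else 2)
    else if v ∈ A then (if a = y then 0 else if a = z then 1 else 2)
    else (if a = z then 0 else if a = x then 1 else 2)
  have hp := rk_prof r
  have e : σ (rk r) y z := by
    refine h y z hyz _ hp ?_
    intro v hv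
    by_cases c : v = u
    · simp [rk, r, c, hxy.symm, hxz.symm, hyz.symm]
    · have : v ∈ A := by simpa [c] using hv
      simp [rk, r, c, this, hyz.symm]
  by_cases k : σ (rk r) x z
  · left
    refine spread hX hW hU hI hxz ⟨rk r, hp, ?_, ?_, k⟩
    · intro v hv
      have c : v = u := hv
      simp [rk, r, c, hxz.symm, hyz.symm]
    · intro v hv
      have c : v ≠ u := hv
      by_cases hA : v ∈ A <;> simp [rk, r, c, hA, hxy, hxz, hyz.symm]
  · right
    have k2 : σ (rk r) y x := by
      by_contra k2
      exact (hW _ hp).2 _ _ _ k2 k e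
    refine spread hX hW hU hI hxy.symm ⟨rk r, hp, ?_, ?_, k2⟩
    · intro v hv
      have c : v ≠ u := fun c => hu (c ▸ hv)
      simp [rk, r, c, hv, hxy, hxz]
    · intro v hv
      by_cases c : v = u <;> simp [rk, r, c, hv, hxy.symm, hxz, hyz]

theorem exists_single (hX : ∃ a b c : X, a ≠ b ∧ a ≠ c ∧ b ≠ c)
    (hW : ∀ f, IsProf f → IsWeakPref (σ f)) (hU : Unanimity σ) (hI : Independence σ)
    {A : Set V} (hA : A.Finite) :
    (∀ a b, a ≠ b → S σ A a b) → ∃ u, ∀ a b, a ≠ b → S σ {u} a b := by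
  induction A, hA using Set.Finite.induction_on with
  | empty =>
    intro h
    obtain ⟨x, y, z, hxy, -⟩ := id hX
    have hp := rk_prof (fun (_ : V) (_ : X) => 0)
    exact absurd (h y x hxy.symm _ hp (by simp))
      ((hW _ hp).1 _ _ (h x y hxy _ hp (by simp)))
  | insert hu _ ih =>
    intro h
    rcases split hX hW hU hI hu h with h | h
    · exact ⟨_, h⟩
    · exact ih h

end

end ArrowAux

/-- Arrow's Impossibility Theorem: over a finite nonempty set of voters,
every social welfare function satisfying unanimity and independence is dictatorial. -/
theorem arrow_impossibility {V X : Type*} [Finite V] [Nonempty V]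
    (hX : ∃ a b c : X, a ≠ b ∧ a ≠ c ∧ b ≠ c)
    (σ : (V → X → X → Prop) → X → X → Prop)
    (hW : ∀ f : V → X → X → Prop, IsProf f → IsWeakPref (σ f))
    (hU : Unanimity σ) (hI : Independence σ) :
    Dictatorial σ := by
  obtain ⟨u, hu⟩ := ArrowAux.exists_single hX hW hU hI (Set.finite_univ (α := V))
    (fun a b _ f hf h => hU a b f hf (fun v => h v (Set.mem_univ v)))
  refine ⟨u, fun x y f hf h => hu x y ?_ f hf ?_⟩
  · rintro rfl
    exact (hf u).1 _ _ h h
  · intro v hv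
    have c : v = u := hv
    rwa [c]
end

section
/- (Fishburn's Possibility Theorem) Let V be an infinite set of voters and X a set of alternatives with at least 3 elements. Then there exists a social welfare function σ satisfying unanimity and independence that is not dictatorial. -/
/-- Fishburn's Possibility Theorem: over an infinite set of voters
there is a non-dictatorial social welfare function satisfying unanimity and
independence. -/
theorem fishburn_possibility {V X : Type*} [Infinite V]
    (hX : ∃ a b c : X, a ≠ b ∧ a ≠ c ∧ b ≠ c) :
    ∃ σ : (V → X → X → Prop) → X → X → Prop,
      (∀ f : V → X → X → Prop, IsProf f → IsWeakPref (σ f)) ∧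
      Unanimity σ ∧ Independence σ ∧ ¬ Dictatorial σ := by
  classical
  obtain ⟨a, b, c, hab, -, -⟩ := hX
  refine ⟨fun f x y => ∀ᶠ v in (Filter.hyperfilter V : Filter V), f v x y, ?_, ?_, ?_, ?_⟩
  · intro f hf
    refine ⟨fun x y h h' => ?_, fun x y z h h' => ?_⟩
    · obtain ⟨v, hv, hv'⟩ := (h.and h').exists
      exact (hf v).1 x y hv hv'
    · rw [← Ultrafilter.eventually_not] at h h' ⊢
      filter_upwards [h, h'] with v hv hv'
      exact (hf v).2 x y z hv hv'
  · intro x y f _ h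
    exact Filter.Eventually.of_forall h
  · intro x y f g _ _ h
    exact ⟨Filter.eventually_congr (Filter.Eventually.of_forall fun v => (h v).1),
      Filter.eventually_congr (Filter.Eventually.of_forall fun v => (h v).2)⟩
  · rintro ⟨v0, h⟩
    have h1 := h a b (fun v x y => v = v0 ∧ x = a ∧ y ≠ a) (by
      intro v
      refine ⟨?_, ?_⟩
      · rintro x y ⟨_, h1, _⟩ ⟨_, _, h2⟩
        exact h2 h1
      · rintro x y z h1 h2 ⟨h3, h4, h5⟩
        by_cases hy : y = a
        · exact h2 ⟨h3, hy, h5⟩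
        · exact h1 ⟨h3, h4, hy⟩) ⟨rfl, rfl, hab.symm⟩
    have h2 : ∀ᶠ v in (Filter.hyperfilter V : Filter V), v ≠ v0 :=
      (Set.finite_singleton v0).compl_mem_hyperfilter
    obtain ⟨v, hv, hv'⟩ := (h1.and h2).exists
    exact hv' hv.1
end
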